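/- For every integer n ≥ 1, the number of Dyck bridges of semi-length n whose summits are non-decreasing (i.e., reading the summits from left to right, their heights form a weakly increasing sequence) equals the Fibonacci number F_{2n+1}. -/

import Mathlib

/-- The step associated to a letter: `true` is an up step `+1`, `false` a down step `-1`. -/
def stepVal (b : Bool) : ℤ := if b then 1 else -1

/-- Partial sum `S_i`: the sum of the first `i` steps of the word `w`. -/
def psum {L : ℕ} (w : Fin L → Bool) (i : ℕ) : ℤ :=
  ∑ j : Fin L, if (j : ℕ) < i then stepVal (w j) else 0

/-- A Dyck bridge: a `±1` word whose total sum is `0`. -/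
def IsBridge {L : ℕ} (w : Fin L → Bool) : Prop := psum w L = 0

/-- A Dyck path: a bridge all of whose partial sums are nonnegative. -/
def IsDyck {L : ℕ} (w : Fin L → Bool) : Prop :=
  IsBridge w ∧ ∀ i : ℕ, 0 ≤ psum w i

/-- A peak at (0-based) position `i`: step `i` is up and step `i+1` is down. -/
def IsPeak {L : ℕ} (w : Fin L → Bool) (i : ℕ) : Prop :=
  ∃ j k : Fin L, (j : ℕ) = i ∧ (k : ℕ) = i + 1 ∧ w j = true ∧ w k = false

/-- The height of the peak at (0-based) position `i`, i.e. the altitude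
reached by its up step. -/
def peakHeight {L : ℕ} (w : Fin L → Bool) (i : ℕ) : ℤ := psum w (i + 1)

/-- A crossing of the x-axis at (1-based) index `i`: `0 < i < L`, `S_i = 0`,
and the steps `w_i`, `w_{i+1}` (1-based) are equal. -/
def IsCrossing {L : ℕ} (w : Fin L → Bool) (i : ℕ) : Prop :=
  0 < i ∧ i < L ∧ psum w i = 0 ∧
    ∃ j k : Fin L, (j : ℕ) + 1 = i ∧ (k : ℕ) = i ∧ w j = w k

/-- A summit of a word of length `L`: an index `i` with `0 ≤ i ≤ L` whose
altitude is strictly higher than that of its direct neighbors.  An internal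
index `0 < i < L` is a summit iff the `i`-th step (1-based) is up and the
`(i+1)`-st is down; `i = 0` is a summit iff the first step is down; `i = L`
is a summit iff the last step is up. -/
def IsSummit {L : ℕ} (w : Fin L → Bool) (i : ℕ) : Prop :=
  (i = 0 ∧ ∃ j : Fin L, (j : ℕ) = 0 ∧ w j = false) ∨
  (0 < i ∧ i < L ∧
    ∃ j k : Fin L, (j : ℕ) + 1 = i ∧ (k : ℕ) = i ∧ w j = true ∧ w k = false) ∨
  (i = L ∧ ∃ j : Fin L, (j : ℕ) + 1 = L ∧ w j = true)

/-!
Read a word from left to right, keeping track of its last step and of the number `m` of up steps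
needed to climb back to the last summit. While the word goes down, `m` grows; while it goes up,
`m` decreases; and a turn from up to down is a new summit, allowed exactly when `m ≤ 0`, after which
`m = 1`. With `u` up steps left and `m ≥ 0`, these transitions are the Fibonacci recurrence: there
are `F_{2 (u - m) + 1}` continuations after an up step and, if `u > 0`, `F_{2 (u - m) + 2}` after a
down step. The final height is irrelevant as long as it is at most the height of the last summit,
because the last run of down steps is then determined by the rest of the word.
-/

section Words

variable {L : ℕ}

lemma psum_zero (w : Fin L → Bool) : psum w 0 = 0 := by
  simp [psum]

lemma psum_cons_succ (b : Bool) (w : Fin L → Bool) (i : ℕ) :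
    psum (Fin.cons b w : Fin (L + 1) → Bool) (i + 1) = stepVal b + psum w i := by
  simp [psum, Fin.sum_univ_succ]

lemma neg_length_le_psum (w : Fin L → Bool) (i : ℕ) : -(L : ℤ) ≤ psum w i := by
  have step_ge (j : Fin L) : -1 ≤ if (j : ℕ) < i then stepVal (w j) else 0 := by
    unfold stepVal; split_ifs <;> decide
  simpa [psum] using Finset.card_nsmul_le_sum Finset.univ _ (-1) fun j _ => step_ge j

lemma card_subtype_fin_succ_arrow {α : Type*} [Fintype α] (P : (Fin (L + 1) → α) → Prop) :
    Nat.card {w // P w} = ∑ a, Nat.card {w : Fin L → α // P (Fin.cons a w)} := by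
  rw [← Nat.card_sigma]
  exact Nat.card_congr <|
    ((Fin.consEquiv fun _ => α).subtypeEquiv fun _ => Iff.rfl).symm.trans <|
      Equiv.subtypeProdEquivSigmaSubtype fun a w => P (Fin.cons a w)

/-- Index `i` is a summit of the word `w` when `w` is preceded by the step `b` and followed by a
down step. With `b = true` these are the summits of `w`, both ends included; a general `b` lets the
summits of a word be read off from those of its tail. -/
def IsSummitAfter (b : Bool) (w : Fin L → Bool) (i : Fin (L + 1)) : Prop :=
  (Fin.cons b w : Fin (L + 1) → Bool) i = true ∧ (Fin.snoc w false : Fin (L + 1) → Bool) i = false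

lemma isSummitAfter_cons_zero {a b : Bool} {w : Fin L → Bool} :
    IsSummitAfter a (Fin.cons b w : Fin (L + 1) → Bool) 0 ↔ a = true ∧ b = false := by
  simp [IsSummitAfter]

lemma isSummitAfter_cons_succ {a b : Bool} {w : Fin L → Bool} {i : Fin (L + 1)} :
    IsSummitAfter a (Fin.cons b w : Fin (L + 1) → Bool) i.succ ↔ IsSummitAfter b w i := by
  simp [IsSummitAfter, ← Fin.cons_snoc_eq_snoc_cons]

lemma isSummit_iff_isSummitAfter_true {w : Fin (L + 1) → Bool} {i : Fin (L + 2)} :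
    IsSummit w i ↔ IsSummitAfter true w i := by
  induction i using Fin.cases with
  | zero => simp [IsSummit, IsSummitAfter]
  | succ k =>
    induction k using Fin.lastCases with
    | last =>
      have last_step : (∃ j : Fin (L + 1), (j : ℕ) = L ∧ w j = true) ↔ w (Fin.last L) = true :=
        ⟨fun ⟨_, hj, hw⟩ => (Fin.ext hj : _ = Fin.last L) ▸ hw, fun hw => ⟨Fin.last L, rfl, hw⟩⟩
      simpa [IsSummit, IsSummitAfter] using last_step
    | cast k =>
      have snoc_eq : (Fin.snoc w false : Fin (L + 2) → Bool) k.castSucc.succ = w k.succ :=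
        Fin.snoc_castSucc (α := fun _ => Bool) false w k.succ
      simp only [IsSummit, IsSummitAfter, snoc_eq, Fin.cons_succ]
      constructor
      · rintro (⟨h, -⟩ | ⟨-, -, j, j', hj, hj', hw, hw'⟩ | ⟨h, -⟩)
        · simp at h
        · obtain rfl : j = k.castSucc := Fin.ext (by simpa using hj)
          obtain rfl : j' = k.succ := Fin.ext (by simpa using hj')
          exact ⟨hw, hw'⟩
        · simp [k.isLt.ne] at h
      · rintro ⟨hw, hw'⟩
        exact .inr (.inl ⟨by simp, by simp, k.castSucc, k.succ, rfl, rfl, hw, hw'⟩)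

lemma IsSummit.lt_succ {w : Fin L → Bool} {i : ℕ} (hi : IsSummit w i) : i < L + 1 := by
  rcases hi with ⟨h, -⟩ | ⟨-, h, -⟩ | ⟨h, -⟩ <;> omega

lemma monotoneOn_isSummitAfter_true_iff (w : Fin L → Bool) :
    MonotoneOn (fun i : Fin (L + 1) => psum w i) {i | IsSummitAfter true w i} ↔
      ∀ i j : ℕ, IsSummit w i → IsSummit w j → i < j → psum w i ≤ psum w j := by
  cases L with
  | zero =>
    refine iff_of_true (fun i _ j _ _ => by simp [Fin.fin_one_eq_zero]) fun i j _ hj hij => ?_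
    have := hj.lt_succ
    omega
  | succ L =>
    constructor
    · intro h i j hi hj hij
      exact h (a := ⟨i, hi.lt_succ⟩) (isSummit_iff_isSummitAfter_true.1 hi)
        (b := ⟨j, hj.lt_succ⟩) (isSummit_iff_isSummitAfter_true.1 hj) hij.le
    · intro h i hi j hj hij
      rcases hij.eq_or_lt with rfl | hij
      · rfl
      · exact h i j (isSummit_iff_isSummitAfter_true.2 hi)
          (isSummit_iff_isSummitAfter_true.2 hj) hij

/-- The summits of `w`, read after a step `b` as in `IsSummitAfter`, have weakly increasing heights,
all at least `m`. The bound `m` stands for the height, relative to the start of `w`, of the last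
summit before `w`. -/
def SummitsMonotoneAbove (b : Bool) (m : ℤ) (w : Fin L → Bool) : Prop :=
  (∀ i, IsSummitAfter b w i → m ≤ psum w i) ∧
    MonotoneOn (fun i : Fin (L + 1) => psum w i) {i | IsSummitAfter b w i}

lemma summitsMonotoneAbove_cons {a b : Bool} (hab : ¬(a = true ∧ b = false)) (m : ℤ)
    (w : Fin L → Bool) :
    SummitsMonotoneAbove a m (Fin.cons b w : Fin (L + 1) → Bool) ↔
      SummitsMonotoneAbove b (m - stepVal b) w := by
  simp [SummitsMonotoneAbove, MonotoneOn, Fin.forall_fin_succ (n := L + 1), isSummitAfter_cons_zero,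
    isSummitAfter_cons_succ, hab, psum_cons_succ, add_comm (stepVal b)]

lemma summitsMonotoneAbove_true_cons_false (m : ℤ) (w : Fin L → Bool) :
    SummitsMonotoneAbove true m (Fin.cons false w : Fin (L + 1) → Bool) ↔
      m ≤ 0 ∧ SummitsMonotoneAbove false 1 w := by
  have bound_of_nonpos (hpos : ∀ i, IsSummitAfter false w i → 1 ≤ psum w i) (hm : m ≤ 0)
      (i : Fin (L + 1)) (hi : IsSummitAfter false w i) : 1 + m ≤ psum w i := by
    have := hpos i hi
    omega
  simpa [SummitsMonotoneAbove, MonotoneOn, Fin.forall_fin_succ (n := L + 1),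
    isSummitAfter_cons_zero, isSummitAfter_cons_succ, psum_cons_succ, psum_zero, stepVal]
    using fun hpos _ => bound_of_nonpos hpos

end Words

/-- The number of words of length `L` and final height `s` whose summits, read after a step `b`,
have weakly increasing heights, all at least `m`. -/
noncomputable def monotoneSummitCount (b : Bool) (m : ℤ) (L : ℕ) (s : ℤ) : ℕ :=
  Nat.card {w : Fin L → Bool // psum w L = s ∧ SummitsMonotoneAbove b m w}

lemma monotoneSummitCount_eq_zero_of_lt {b : Bool} {m : ℤ} {L : ℕ} {s : ℤ} (hs : s < -L) :
    monotoneSummitCount b m L s = 0 := by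
  have : IsEmpty {w : Fin L → Bool // psum w L = s ∧ SummitsMonotoneAbove b m w} :=
    ⟨fun ⟨w, hw, _⟩ => (hw ▸ hs).not_ge (neg_length_le_psum w L)⟩
  exact Nat.card_of_isEmpty

lemma monotoneSummitCount_length_zero (b : Bool) (m s : ℤ) :
    monotoneSummitCount b m 0 s = if s = 0 ∧ (b = true → m ≤ 0) then 1 else 0 := by
  have empty_word_iff (w : Fin 0 → Bool) :
      psum w 0 = s ∧ SummitsMonotoneAbove b m w ↔ s = 0 ∧ (b = true → m ≤ 0) := by
    simp [SummitsMonotoneAbove, MonotoneOn, IsSummitAfter, Fin.snoc, psum_zero, @eq_comm _ s]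
  simp only [monotoneSummitCount, empty_word_iff]
  split_ifs with h
  · simp [h.1, eq_true h.2]
  · simp [h]

lemma monotoneSummitCount_succ (b : Bool) (m : ℤ) (L : ℕ) (s : ℤ) :
    monotoneSummitCount b m (L + 1) s =
      ∑ c, Nat.card {w : Fin L → Bool // psum w L = s - stepVal c ∧
        SummitsMonotoneAbove b m (Fin.cons c w : Fin (L + 1) → Bool)} := by
  simp only [monotoneSummitCount, card_subtype_fin_succ_arrow, psum_cons_succ, eq_sub_iff_add_eq']

lemma monotoneSummitCount_false_succ (m : ℤ) (L : ℕ) (s : ℤ) :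
    monotoneSummitCount false m (L + 1) s =
      monotoneSummitCount true (m - 1) L (s - 1) + monotoneSummitCount false (m + 1) L (s + 1) := by
  rw [monotoneSummitCount_succ, Fintype.sum_bool]
  simp [monotoneSummitCount, summitsMonotoneAbove_cons, stepVal]

lemma monotoneSummitCount_true_succ (m : ℤ) (L : ℕ) (s : ℤ) :
    monotoneSummitCount true m (L + 1) s =
      monotoneSummitCount true (m - 1) L (s - 1) +
        if m ≤ 0 then monotoneSummitCount false 1 L (s + 1) else 0 := by
  rw [monotoneSummitCount_succ, Fintype.sum_bool]
  split_ifs with hm <;>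
    simp [monotoneSummitCount, summitsMonotoneAbove_cons, summitsMonotoneAbove_true_cons_false,
      stepVal, hm]

lemma monotoneSummitCount_false_neg_length (m : ℤ) (L : ℕ) :
    monotoneSummitCount false m L (-L) = 1 := by
  induction L generalizing m with
  | zero => simp [monotoneSummitCount_length_zero]
  | succ L ih =>
    rw [monotoneSummitCount_false_succ, monotoneSummitCount_eq_zero_of_lt (by omega), zero_add,
      show -((L + 1 : ℕ) : ℤ) + 1 = -L by omega, ih]

lemma fib_two_mul_sub_add_two (u k : ℕ) :
    Nat.fib (2 * u + 2 - 2 * k) = Nat.fib (2 * u + 1 - 2 * k) + Nat.fib (2 * u - 2 * k) := by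
  rcases le_or_gt k u with hk | hk
  · obtain ⟨r, rfl⟩ := Nat.exists_eq_add_of_le hk
    rw [show 2 * (k + r) + 2 - 2 * k = 2 * r + 2 by omega, Nat.fib_add_two, add_comm]
    congr 2 <;> omega
  · rw [show 2 * u + 2 - 2 * k = 0 by omega, show 2 * u + 1 - 2 * k = 0 by omega,
      show 2 * u - 2 * k = 0 by omega, Nat.fib_zero]

-- When `u < m`, the last summit is out of reach: the truncated index `0` gives the count `F_0 = 0`.
lemma monotoneSummitCount_eq_fib (L : ℕ) (m : ℤ) (u : ℕ) (hu : 2 * u ≤ L + m.toNat) :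
    monotoneSummitCount true m L (2 * u - L) = Nat.fib (2 * u + 1 - 2 * m.toNat) ∧
      (1 ≤ m → 1 ≤ u →
        monotoneSummitCount false m L (2 * u - L) = Nat.fib (2 * u + 2 - 2 * m.toNat)) := by
  induction L generalizing m u with
  | zero =>
    simp only [monotoneSummitCount_length_zero]
    refine ⟨?_, fun _ hu' => ?_⟩
    · split_ifs with h
      · obtain ⟨hu', hm⟩ : u = 0 ∧ m ≤ 0 := ⟨by omega, h.2 trivial⟩
        simp [hu', Int.toNat_of_nonpos hm]
      · rw [show 2 * u + 1 - 2 * m.toNat = 0 by omega, Nat.fib_zero]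
    · rw [if_neg (by omega), show 2 * u + 2 - 2 * m.toNat = 0 by omega, Nat.fib_zero]
  | succ L ih =>
    rw [monotoneSummitCount_true_succ, monotoneSummitCount_false_succ]
    cases u with
    | zero =>
      rw [monotoneSummitCount_eq_zero_of_lt (by omega), zero_add,
        show 2 * ((0 : ℕ) : ℤ) - (L + 1 : ℕ) + 1 = -L by omega,
        monotoneSummitCount_false_neg_length]
      refine ⟨?_, by omega⟩
      split_ifs with hm
      · simp [Int.toNat_of_nonpos hm]
      · rw [show 2 * 0 + 1 - 2 * m.toNat = 0 by omega, Nat.fib_zero]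
    | succ u =>
      rw [show 2 * ((u + 1 : ℕ) : ℤ) - (L + 1 : ℕ) - 1 = 2 * u - L by omega,
        show 2 * ((u + 1 : ℕ) : ℤ) - (L + 1 : ℕ) + 1 = 2 * (u + 1 : ℕ) - L by omega,
        (ih (m - 1) u (by omega)).1]
      refine ⟨?_, fun hm _ => ?_⟩
      · split_ifs with hm
        · rw [(ih 1 (u + 1) (by omega)).2 le_rfl (by omega), Int.toNat_of_nonpos hm,
            Int.toNat_of_nonpos (by omega)]
          exact Nat.fib_add_two.symm
        · rw [add_zero]
          congr 1
          omega
      · rw [(ih (m + 1) (u + 1) (by omega)).2 (by omega) (by omega),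
          show 2 * (u + 1) + 2 - 2 * m.toNat = 2 * u + 2 - 2 * (m - 1).toNat by omega,
          show 2 * (u + 1) + 2 - 2 * (m + 1).toNat = 2 * u - 2 * (m - 1).toNat by omega,
          fib_two_mul_sub_add_two]

theorem stmt_16_general {L u : ℕ} (hu : 2 * u ≤ L) :
    Nat.card {w : Fin L → Bool // psum w L = 2 * u - L ∧
        ∀ i j : ℕ, IsSummit w i → IsSummit w j → i < j →
          psum w i ≤ psum w j} = Nat.fib (2 * u + 1) := by
  have above_neg_length (w : Fin L → Bool) : SummitsMonotoneAbove true (-L) w ↔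
      ∀ i j : ℕ, IsSummit w i → IsSummit w j → i < j → psum w i ≤ psum w j := by
    rw [← monotoneOn_isSummitAfter_true_iff]
    exact and_iff_right fun i _ => neg_length_le_psum w i
  simp only [← above_neg_length]
  simpa [monotoneSummitCount] using (monotoneSummitCount_eq_fib L (-L) u (by omega)).1

/-- For every integer `n ≥ 1`, the number of Dyck bridges of
semi-length `n` whose summits are non-decreasing (reading the summits from
left to right, their heights weakly increase) equals the Fibonacci number
`F_{2n+1}`. -/
theorem stmt_16 (n : ℕ) (hn : 1 ≤ n) :
    Nat.card {w : Fin (2 * n) → Bool // IsBridge w ∧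
        ∀ i j : ℕ, IsSummit w i → IsSummit w j → i < j →
          psum w i ≤ psum w j} = Nat.fib (2 * n + 1) := by
  simpa [IsBridge] using stmt_16_general (L := 2 * n) (u := n) le_rfl
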